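/- The interaction preorder ⊑int on ordinary λ-terms is a consistent inequational λ-theory (a compatible preorder containing β-conversion, different from the total relation); moreover it is not semi-extensional (it does not contain η-reduction), hence not extensional. -/

import Mathlib

set_option autoImplicit false

/-! ### Players -/

inductive Player : Type
  | white
  | black
deriving DecidableEq

/-- The opposite player. -/
def Player.op : Player → Player
  | .white => .black
  | .black => .white

/-- `gamma p q` is `0` if the players agree (silent) and `1` otherwise (interaction). -/
def Player.gamma (p q : Player) : ℕ := if p = q then 0 else 1

/-! ### Ordinary λ-terms (de Bruijn representation) -/

inductive Lam : Type
  | var : ℕ → Lam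
  | lam : Lam → Lam
  | app : Lam → Lam → Lam
deriving DecidableEq

namespace Lam

/-- Shift the free de Bruijn indices ≥ `d` by one. -/
def liftAt : Lam → ℕ → Lam
  | .var n, d => .var (if n < d then n else n + 1)
  | .lam t, d => .lam (t.liftAt (d + 1))
  | .app t u, d => .app (t.liftAt d) (u.liftAt d)

/-- Capture-avoiding substitution of `u` for the de Bruijn index `x`. -/
def subst : Lam → ℕ → Lam → Lam
  | .var n, x, u => if n = x then u else if x < n then .var (n - 1) else .var n
  | .lam t, x, u => .lam (t.subst (x + 1) (u.liftAt 0))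
  | .app t s, x, u => .app (t.subst x u) (s.subst x u)

end Lam

/-- Root β-rule: `(λx.t) u ↦ t[x:=u]`. -/
inductive LBetaRoot : Lam → Lam → Prop
  | beta (t u : Lam) : LBetaRoot (.app (.lam t) u) (t.subst 0 u)

/-- Root η-rule: `λx. t x ↦ t` with `x ∉ FV(t)` (enforced by the lifting). -/
inductive LEtaRoot : Lam → Lam → Prop
  | eta (t : Lam) : LEtaRoot (.lam (.app (t.liftAt 0) (.var 0))) t

/-- Closure of a root relation under all contexts. -/
inductive LFull (R : Lam → Lam → Prop) : Lam → Lam → Prop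
  | root {t u : Lam} : R t u → LFull R t u
  | lam {t u : Lam} : LFull R t u → LFull R (.lam t) (.lam u)
  | appL {t t' : Lam} (u : Lam) : LFull R t t' → LFull R (.app t u) (.app t' u)
  | appR (t : Lam) {u u' : Lam} : LFull R u u' → LFull R (.app t u) (.app t u')

/-- Closure under applicative spine contexts `⟨·⟩ t1 … tk`. -/
inductive LSpine (R : Lam → Lam → Prop) : Lam → Lam → Prop
  | root {t u : Lam} : R t u → LSpine R t u
  | appL {t t' : Lam} (u : Lam) : LSpine R t t' → LSpine R (.app t u) (.app t' u)

/-- Closure under head contexts `λx1…xn.⟨·⟩ t1 … tk`. -/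
inductive LHead (R : Lam → Lam → Prop) : Lam → Lam → Prop
  | spine {t u : Lam} : LSpine R t u → LHead R t u
  | lam {t u : Lam} : LHead R t u → LHead R (.lam t) (.lam u)

/-- β-reduction. -/
def LBeta : Lam → Lam → Prop := LFull LBetaRoot
/-- η-reduction. -/
def LEta : Lam → Lam → Prop := LFull LEtaRoot
/-- Head reduction. -/
def LHStep : Lam → Lam → Prop := LHead LBetaRoot
/-- Multistep head reduction. -/
def LHSteps : Lam → Lam → Prop := Relation.ReflTransGen LHStep

/-- β-conversion (reflexive-symmetric-transitive closure of β-reduction). -/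
def LBetaConv : Lam → Lam → Prop :=
  Relation.ReflTransGen (fun a b => LBeta a b ∨ LBeta b a)
/-- η-conversion. -/
def LEtaConv : Lam → Lam → Prop :=
  Relation.ReflTransGen (fun a b => LEta a b ∨ LEta b a)

/-- Head normal forms: no head step out of `t`. -/
def Lam.LHNF (t : Lam) : Prop := ∀ u, ¬ LHStep t u

/-- Head convergence: `t ⇓h`. -/
def Lam.HConv (t : Lam) : Prop := ∃ h, LHSteps t h ∧ h.LHNF

/-- Ordinary contexts (one hole). -/
inductive LCtx : Type
  | hole : LCtx
  | lam : LCtx → LCtx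
  | appL : LCtx → Lam → LCtx
  | appR : Lam → LCtx → LCtx

/-- Plugging (allowing variable capture). -/
def LCtx.fill : LCtx → Lam → Lam
  | .hole, t => t
  | .lam C, t => .lam (C.fill t)
  | .appL C u, t => .app (C.fill t) u
  | .appR s C, t => .app s (C.fill t)

/-- Head contextual preorder on λ-terms. -/
def CtxLe (t u : Lam) : Prop := ∀ C : LCtx, (C.fill t).HConv → (C.fill u).HConv

/-! ### Checkers terms -/

inductive CTerm : Type
  | var : ℕ → CTerm
  | lam : Player → CTerm → CTerm
  | app : Player → CTerm → CTerm → CTerm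
deriving DecidableEq

namespace CTerm

/-- Shift the free de Bruijn indices ≥ `d` by one. -/
def liftAt : CTerm → ℕ → CTerm
  | .var n, d => .var (if n < d then n else n + 1)
  | .lam p t, d => .lam p (t.liftAt (d + 1))
  | .app p t u, d => .app p (t.liftAt d) (u.liftAt d)

/-- Capture-avoiding substitution of `u` for the de Bruijn index `x`. -/
def subst : CTerm → ℕ → CTerm → CTerm
  | .var n, x, u => if n = x then u else if x < n then .var (n - 1) else .var n
  | .lam p t, x, u => .lam p (t.subst (x + 1) (u.liftAt 0))
  | .app p t s, x, u => .app p (t.subst x u) (s.subst x u)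

/-- The underlying ordinary λ-term of a checkers term. -/
def untag : CTerm → Lam
  | .var n => .var n
  | .lam _ t => .lam t.untag
  | .app _ t u => .app t.untag u.untag

end CTerm

/-- Player lifting: tag every abstraction and application with player `p`. -/
def Lam.tag : Lam → Player → CTerm
  | .var n, _ => .var n
  | .lam t, p => .lam p (t.tag p)
  | .app t u, p => .app p (t.tag p) (u.tag p)

/-- Silent β root rule: the abstraction and the application carry the same player. -/
inductive SilentRoot : CTerm → CTerm → Prop
  | beta (p : Player) (t u : CTerm) : SilentRoot (.app p (.lam p t) u) (t.subst 0 u)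

/-- Interaction β root rule: the application carries the opposite player of the abstraction. -/
inductive InterRoot : CTerm → CTerm → Prop
  | beta (p : Player) (t u : CTerm) : InterRoot (.app p.op (.lam p t) u) (t.subst 0 u)

/-- Closure of a root relation under all checkers contexts. -/
inductive CFull (R : CTerm → CTerm → Prop) : CTerm → CTerm → Prop
  | root {t u : CTerm} : R t u → CFull R t u
  | lam (p : Player) {t u : CTerm} : CFull R t u → CFull R (.lam p t) (.lam p u)
  | appL (p : Player) {t t' : CTerm} (u : CTerm) : CFull R t t' → CFull R (.app p t u) (.app p t' u)
  | appR (p : Player) (t : CTerm) {u u' : CTerm} : CFull R u u' → CFull R (.app p t u) (.app p t u')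

/-- Closure under applicative spine contexts `⟨·⟩ @_{q1} t1 … @_{qk} tk`. -/
inductive CSpine (R : CTerm → CTerm → Prop) : CTerm → CTerm → Prop
  | root {t u : CTerm} : R t u → CSpine R t u
  | appL (p : Player) {t t' : CTerm} (u : CTerm) : CSpine R t t' → CSpine R (.app p t u) (.app p t' u)

/-- Closure under checkers head contexts `λ_{p1}x1…λ_{pn}xn.⟨·⟩ @_{q1} t1 … @_{qk} tk`. -/
inductive CHead (R : CTerm → CTerm → Prop) : CTerm → CTerm → Prop
  | spine {t u : CTerm} : CSpine R t u → CHead R t u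
  | lam (p : Player) {t u : CTerm} : CHead R t u → CHead R (.lam p t) (.lam p u)

/-- Silent β-reduction `→τ`. -/
def StepTau : CTerm → CTerm → Prop := CFull SilentRoot
/-- Interaction β-reduction `→⊛`. -/
def StepInt : CTerm → CTerm → Prop := CFull InterRoot
/-- Checkers β-reduction `→βch`. -/
def StepBch (t u : CTerm) : Prop := StepTau t u ∨ StepInt t u

/-- Silent head reduction `→hτ`. -/
def HStepTau : CTerm → CTerm → Prop := CHead SilentRoot
/-- Interaction head reduction `→h⊛`. -/
def HStepInt : CTerm → CTerm → Prop := CHead InterRoot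
/-- Checkers head reduction `→hch`. -/
def HStepCh (t u : CTerm) : Prop := HStepTau t u ∨ HStepInt t u

/-- Checkers head normal form. -/
def CTerm.HNF (t : CTerm) : Prop := ∀ u, ¬ HStepCh t u

/-- `BigStep t k` means `t ⇓^k`: the (deterministic) checkers head evaluation of `t`
terminates and performs exactly `k` interaction steps. -/
inductive BigStep : CTerm → ℕ → Prop
  | nf {t : CTerm} : t.HNF → BigStep t 0
  | silent {t u : CTerm} {k : ℕ} : HStepTau t u → BigStep u k → BigStep t k
  | inter {t u : CTerm} {k : ℕ} : HStepInt t u → BigStep u k → BigStep t (k + 1)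

/-- `HRed t n i u`: a checkers head reduction sequence from `t` to `u` of length `n`
containing exactly `i` interaction steps. -/
inductive HRed : CTerm → ℕ → ℕ → CTerm → Prop
  | refl (t : CTerm) : HRed t 0 0 t
  | silent {t u s : CTerm} {n i : ℕ} : HStepTau t u → HRed u n i s → HRed t (n + 1) i s
  | inter {t u s : CTerm} {n i : ℕ} : HStepInt t u → HRed u n i s → HRed t (n + 1) (i + 1) s

/-- Checkers contexts (one hole). -/
inductive CCtx : Type
  | hole : CCtx
  | lam : Player → CCtx → CCtx
  | appL : Player → CCtx → CTerm → CCtx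
  | appR : Player → CTerm → CCtx → CCtx

/-- Plugging (allowing variable capture). -/
def CCtx.fill : CCtx → CTerm → CTerm
  | .hole, t => t
  | .lam p C, t => .lam p (C.fill t)
  | .appL p C u, t => .app p (C.fill t) u
  | .appR p s C, t => .app p s (C.fill t)

/-- Player lifting of ordinary contexts. -/
def LCtx.tag : LCtx → Player → CCtx
  | .hole, _ => .hole
  | .lam C, p => .lam p (C.tag p)
  | .appL C u, p => .appL p (C.tag p) (u.tag p)
  | .appR s C, p => .appR p (s.tag p) (C.tag p)

/-- Checkers interaction preorder `≼ctx⊛` on checkers terms. -/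
def IntCtxLe (t u : CTerm) : Prop :=
  ∀ (C : CCtx) (k : ℕ), BigStep (C.fill t) k → BigStep (C.fill u) k

/-- Checkers interaction improvement `≼imp⊛` on checkers terms. -/
def ImpCtxLe (t u : CTerm) : Prop :=
  ∀ (C : CCtx) (k : ℕ), BigStep (C.fill t) k → ∃ k', k' ≤ k ∧ BigStep (C.fill u) k'

/-- Interaction preorder `⊑int` on ordinary λ-terms, via black lifting. -/
def IntLe (t u : Lam) : Prop := IntCtxLe (t.tag .black) (u.tag .black)

/-- Interaction improvement `⊑int·imp` on ordinary λ-terms, via black lifting. -/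
def ImpLe (t u : Lam) : Prop := ImpCtxLe (t.tag .black) (u.tag .black)

/-- Interaction equivalence `≡int`. -/
def IntEq (t u : Lam) : Prop := IntLe t u ∧ IntLe u t

/-- Silent conversion `=τ`: reflexive-symmetric-transitive closure of `→τ`. -/
def SilentConv : CTerm → CTerm → Prop :=
  Relation.ReflTransGen (fun a b => StepTau a b ∨ StepTau b a)

/-!
A term `t` reduces standardly to `u` if silent spine steps expose the root constructor of `u` and
the immediate subterms of `u` are reached recursively in the same way. This relation contains `→τ`
and is compatible with substitution, and whatever the head reduction of `u` does next, that of `t`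
does after finitely many silent head steps. As head reduction is deterministic, `t` and `u`
evaluate with the same number of interactions. Silent conversion, hence the black lifting of
β-conversion, is therefore contained in `≼ctx⊛`.

An η-expansion is separated from the variable it expands by a white argument: the black
abstraction interacts with it once, the variable does not.
-/

open Relation

namespace CTerm

theorem liftAt_liftAt (t : CTerm) {i j : ℕ} (h : i ≤ j) :
    (t.liftAt i).liftAt (j + 1) = (t.liftAt j).liftAt i := by
  induction t generalizing i j with
  | var n => grind [liftAt]
  | lam p t ih => simp only [liftAt, ih (Nat.succ_le_succ h)]
  | app p t u iht ihu => simp only [liftAt, iht h, ihu h]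

theorem liftAt_subst_of_le (t u : CTerm) {x d : ℕ} (h : x ≤ d) :
    (t.subst x u).liftAt d = (t.liftAt (d + 1)).subst x (u.liftAt d) := by
  induction t generalizing x d u with
  | var n => grind [liftAt, subst]
  | lam p t ih =>
    simp only [liftAt, subst, ih _ (Nat.succ_le_succ h), liftAt_liftAt u (Nat.zero_le d)]
  | app p t s iht ihs => simp only [liftAt, subst, iht u h, ihs u h]

theorem liftAt_subst_of_ge (t u : CTerm) {x d : ℕ} (h : d ≤ x) :
    (t.subst x u).liftAt d = (t.liftAt d).subst (x + 1) (u.liftAt d) := by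
  induction t generalizing x d u with
  | var n => grind [liftAt, subst]
  | lam p t ih =>
    simp only [liftAt, subst, ih _ (Nat.succ_le_succ h), liftAt_liftAt u (Nat.zero_le d)]
  | app p t s iht ihs => simp only [liftAt, subst, iht u h, ihs u h]

theorem subst_liftAt_self (t u : CTerm) (x : ℕ) : (t.liftAt x).subst x u = t := by
  induction t generalizing x u with
  | var n => grind [liftAt, subst]
  | lam p t ih => simp only [liftAt, subst, ih]
  | app p t s iht ihs => simp only [liftAt, subst, iht, ihs]

theorem subst_subst (t u s : CTerm) {x y : ℕ} (h : x ≤ y) :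
    (t.subst x u).subst y s = (t.subst (y + 1) (s.liftAt x)).subst x (u.subst y s) := by
  induction t generalizing x y u s with
  | var n => grind [subst, subst_liftAt_self]
  | lam p t ih =>
    simp only [subst, ih _ _ (Nat.succ_le_succ h), liftAt_liftAt s (Nat.zero_le x),
      liftAt_subst_of_ge u s (Nat.zero_le y)]
  | app p t r iht ihr => simp only [subst, iht u s h, ihr u s h]

end CTerm

/-! ### Labelled head reduction -/

/-- Root β-steps of checkers terms labelled by their number of interactions, `0` or `1`. -/
inductive BetaRoot (i : ℕ) : CTerm → CTerm → Prop
  | beta (p q : Player) (t u : CTerm) (h : p.gamma q = i) :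
      BetaRoot i (.app p (.lam q t) u) (t.subst 0 u)

/-- Labelled spine reduction: the part of head reduction that does not enter abstractions. -/
abbrev SpineStep (i : ℕ) : CTerm → CTerm → Prop := CSpine (BetaRoot i)

/-- Labelled checkers head reduction. -/
abbrev HeadStep (i : ℕ) : CTerm → CTerm → Prop := CHead (BetaRoot i)

/-- Finite sequences of silent spine steps. -/
abbrev SilentSpineSteps : CTerm → CTerm → Prop := ReflTransGen (SpineStep 0)

/-- Finite sequences of silent head steps. -/
abbrev SilentHeadSteps : CTerm → CTerm → Prop := ReflTransGen (HeadStep 0)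

theorem silentRoot_eq_betaRoot_zero : SilentRoot = BetaRoot 0 := by
  ext t u
  constructor
  · rintro ⟨p, t, u⟩
    exact .beta p p t u (if_pos rfl)
  · rintro ⟨p, q, t, u, h⟩
    obtain rfl : p = q := by simpa [Player.gamma] using h
    exact .beta p t u

theorem interRoot_eq_betaRoot_one : InterRoot = BetaRoot 1 := by
  ext t u
  constructor
  · rintro ⟨p, t, u⟩
    exact .beta p.op p t u (by cases p <;> rfl)
  · rintro ⟨p, q, t, u, h⟩
    obtain rfl : p = q.op := by cases p <;> cases q <;> simp_all [Player.gamma, Player.op]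
    exact .beta q t u

theorem hStepTau_eq_headStep_zero : HStepTau = HeadStep 0 :=
  congrArg CHead silentRoot_eq_betaRoot_zero

theorem hStepInt_eq_headStep_one : HStepInt = HeadStep 1 :=
  congrArg CHead interRoot_eq_betaRoot_one

theorem BetaRoot.label_eq_zero_or_one {i : ℕ} {t u : CTerm} (h : BetaRoot i t u) :
    i = 0 ∨ i = 1 := by
  obtain ⟨p, q, t, u, rfl⟩ := h
  cases p <;> cases q <;> simp [Player.gamma]

theorem SpineStep.label_eq_zero_or_one {i : ℕ} {t u : CTerm} (h : SpineStep i t u) :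
    i = 0 ∨ i = 1 := by
  induction h with
  | root h => exact h.label_eq_zero_or_one
  | appL _ _ _ ih => exact ih

theorem HeadStep.label_eq_zero_or_one {i : ℕ} {t u : CTerm} (h : HeadStep i t u) :
    i = 0 ∨ i = 1 := by
  induction h with
  | spine h => exact SpineStep.label_eq_zero_or_one h
  | lam _ _ ih => exact ih

theorem hStepCh_iff_exists_headStep {t u : CTerm} : HStepCh t u ↔ ∃ i, HeadStep i t u := by
  rw [HStepCh, hStepTau_eq_headStep_zero, hStepInt_eq_headStep_one]
  constructor
  · rintro (h | h) <;> exact ⟨_, h⟩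
  · rintro ⟨i, h⟩
    rcases HeadStep.label_eq_zero_or_one h with rfl | rfl
    exacts [.inl h, .inr h]

theorem not_spineStep_lam {i : ℕ} {p : Player} {t u : CTerm} : ¬ SpineStep i (.lam p t) u := by
  rintro ⟨⟨⟩⟩

theorem SpineStep.deterministic {i j : ℕ} {t u v : CTerm} (hu : SpineStep i t u)
    (hv : SpineStep j t v) : i = j ∧ u = v := by
  induction hu generalizing v with
  | root hu =>
    obtain ⟨p, q, t, s, rfl⟩ := hu
    cases hv with
    | root hv =>
      obtain ⟨_, _, _, _, rfl⟩ := hv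
      exact ⟨rfl, rfl⟩
    | appL _ _ hv => exact (not_spineStep_lam hv).elim
  | appL p s hu ih =>
    cases hv with
    | root hv =>
      cases hv
      exact (not_spineStep_lam hu).elim
    | appL _ _ hv => simpa using ih hv

theorem HeadStep.deterministic {i j : ℕ} {t u v : CTerm} (hu : HeadStep i t u)
    (hv : HeadStep j t v) : i = j ∧ u = v := by
  induction hu generalizing v with
  | spine hu =>
    cases hv with
    | spine hv => exact SpineStep.deterministic hu hv
    | lam => exact (not_spineStep_lam hu).elim
  | lam p _ ih =>
    cases hv with
    | spine hv => exact (not_spineStep_lam hv).elim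
    | lam _ hv => simpa using ih hv

theorem SpineStep.liftAt {i : ℕ} {t u : CTerm} (h : SpineStep i t u) (d : ℕ) :
    SpineStep i (t.liftAt d) (u.liftAt d) := by
  induction h with
  | root h =>
    obtain ⟨p, q, t, u, hi⟩ := h
    rw [CTerm.liftAt_subst_of_le t u (Nat.zero_le d)]
    exact .root (.beta p q _ _ hi)
  | appL p u _ ih => exact .appL p _ ih

theorem SpineStep.subst {i : ℕ} {t u : CTerm} (h : SpineStep i t u) (x : ℕ) (s : CTerm) :
    SpineStep i (t.subst x s) (u.subst x s) := by
  induction h with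
  | root h =>
    obtain ⟨p, q, t, u, hi⟩ := h
    rw [CTerm.subst_subst t u s (Nat.zero_le x)]
    exact .root (.beta p q _ _ hi)
  | appL p u _ ih => exact .appL p _ ih

namespace SilentSpineSteps

theorem liftAt {t u : CTerm} (h : SilentSpineSteps t u) (d : ℕ) :
    SilentSpineSteps (t.liftAt d) (u.liftAt d) :=
  h.lift (CTerm.liftAt · d) fun _ _ hs ↦ SpineStep.liftAt hs d

theorem subst {t u : CTerm} (h : SilentSpineSteps t u) (x : ℕ) (s : CTerm) :
    SilentSpineSteps (t.subst x s) (u.subst x s) :=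
  h.lift (CTerm.subst · x s) fun _ _ hs ↦ SpineStep.subst hs x s

theorem appL {t u : CTerm} (h : SilentSpineSteps t u) (p : Player) (s : CTerm) :
    SilentSpineSteps (.app p t s) (.app p u s) :=
  h.lift (CTerm.app p · s) fun _ _ ↦ CSpine.appL p s

theorem headSteps {t u : CTerm} (h : SilentSpineSteps t u) : SilentHeadSteps t u :=
  ReflTransGen.mono (fun _ _ ↦ .spine) _ _ h

end SilentSpineSteps

theorem SilentHeadSteps.lam {t u : CTerm} (h : SilentHeadSteps t u) (p : Player) :
    SilentHeadSteps (.lam p t) (.lam p u) :=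
  h.lift (CTerm.lam p) fun _ _ ↦ CHead.lam p

/-! ### Head normal forms -/

namespace CTerm

/-- Neutral terms `x @_{q1} t1 … @_{qk} tk`. -/
inductive Neutral : CTerm → Prop
  | var (n : ℕ) : Neutral (.var n)
  | app (p : Player) {t : CTerm} (u : CTerm) : Neutral t → Neutral (.app p t u)

/-- The syntactic form `λ_{p1}x1…λ_{pn}xn.x @_{q1} t1 … @_{qk} tk` of head normal forms. -/
inductive HeadNormal : CTerm → Prop
  | neutral {t : CTerm} : Neutral t → HeadNormal t
  | lam (p : Player) {t : CTerm} : HeadNormal t → HeadNormal (.lam p t)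

theorem Neutral.not_spineStep {t u : CTerm} {i : ℕ} (h : t.Neutral) : ¬ SpineStep i t u := by
  induction h generalizing u with
  | var n => rintro ⟨⟨⟩⟩
  | app p s h ih =>
    rintro (⟨⟨⟩⟩ | ⟨_, _, hs⟩)
    · cases h
    · exact ih hs

theorem HeadNormal.not_headStep {t u : CTerm} {i : ℕ} (h : t.HeadNormal) : ¬ HeadStep i t u := by
  induction h generalizing u with
  | neutral h =>
    rintro (hs | _)
    · exact h.not_spineStep hs
    · cases h
  | lam p _ ih =>
    rintro (hs | ⟨_, hs⟩)
    · exact not_spineStep_lam hs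
    · exact ih hs

theorem neutral_or_lam_or_spineStep (t : CTerm) :
    t.Neutral ∨ (∃ p s, t = .lam p s) ∨ ∃ i u, SpineStep i t u := by
  induction t with
  | var n => exact .inl (.var n)
  | lam p t _ => exact .inr (.inl ⟨p, t, rfl⟩)
  | app p t s ih _ =>
    rcases ih with ht | ⟨q, r, rfl⟩ | ⟨i, u, hs⟩
    · exact .inl (.app p s ht)
    · exact .inr (.inr ⟨_, _, .root (.beta p q r s rfl)⟩)
    · exact .inr (.inr ⟨i, _, .appL p s hs⟩)

theorem headNormal_or_headStep (t : CTerm) : t.HeadNormal ∨ ∃ i u, HeadStep i t u := by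
  induction t with
  | var n => exact .inl (.neutral (.var n))
  | lam p t ih =>
    rcases ih with ht | ⟨i, u, hs⟩
    · exact .inl (.lam p ht)
    · exact .inr ⟨i, _, .lam p hs⟩
  | app p t s =>
    rcases neutral_or_lam_or_spineStep (.app p t s) with ht | ⟨_, _, ⟨⟩⟩ | ⟨i, u, hs⟩
    · exact .inl (.neutral ht)
    · exact .inr ⟨i, u, .spine hs⟩

theorem hnf_iff_headNormal {t : CTerm} : t.HNF ↔ t.HeadNormal := by
  constructor
  · intro h
    refine t.headNormal_or_headStep.resolve_right ?_
    rintro ⟨i, u, hs⟩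
    exact h u (hStepCh_iff_exists_headStep.2 ⟨i, hs⟩)
  · intro h u hs
    obtain ⟨i, hs⟩ := hStepCh_iff_exists_headStep.1 hs
    exact h.not_headStep hs

end CTerm

/-! ### Evaluation -/

namespace BigStep

theorem of_headNormal {t : CTerm} (h : t.HeadNormal) : BigStep t 0 :=
  .nf (CTerm.hnf_iff_headNormal.2 h)

theorem of_headStep {t u : CTerm} {i k : ℕ} (hs : HeadStep i t u) (h : BigStep u k) :
    BigStep t (k + i) := by
  rcases HeadStep.label_eq_zero_or_one hs with rfl | rfl
  · exact .silent (hStepTau_eq_headStep_zero ▸ hs) h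
  · exact .inter (hStepInt_eq_headStep_one ▸ hs) h

theorem of_silentHeadSteps {t u : CTerm} {k : ℕ} (hs : SilentHeadSteps t u) (h : BigStep u k) :
    BigStep t k := by
  induction hs using ReflTransGen.head_induction_on with
  | refl => exact h
  | head hs _ ih => exact of_headStep hs ih

@[elab_as_elim]
theorem label_induction {motive : ∀ t k, BigStep t k → Prop}
    (normal : ∀ {t} (ht : t.HeadNormal), motive t 0 (of_headNormal ht))
    (step : ∀ {t u i k} (hs : HeadStep i t u) (h : BigStep u k), motive u k h →
      motive t (k + i) (of_headStep hs h))
    {t : CTerm} {k : ℕ} (h : BigStep t k) : motive t k h := by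
  induction h with
  | nf hn => exact normal (CTerm.hnf_iff_headNormal.1 hn)
  | silent hs h ih => exact step (hStepTau_eq_headStep_zero ▸ hs) h ih
  | inter hs h ih => exact step (hStepInt_eq_headStep_one ▸ hs) h ih

theorem deterministic {t : CTerm} {k l : ℕ} (hk : BigStep t k) (hl : BigStep t l) : k = l := by
  induction hk using label_induction generalizing l with
  | normal ht =>
    cases hl using label_induction with
    | normal => rfl
    | step hs => exact (ht.not_headStep hs).elim
  | step hs _ ih =>
    cases hl using label_induction with
    | normal ht => exact (ht.not_headStep hs).elim
    | step hs' hl =>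
      obtain ⟨rfl, rfl⟩ := HeadStep.deterministic hs hs'
      rw [ih hl]

theorem acc {t : CTerm} {k : ℕ} (h : BigStep t k) : Acc (fun v u ↦ HStepCh u v) t := by
  induction h using label_induction with
  | normal ht => exact ⟨_, fun v hv ↦ (CTerm.hnf_iff_headNormal.2 ht v hv).elim⟩
  | step hs _ ih =>
    refine ⟨_, fun v hv ↦ ?_⟩
    obtain ⟨_, hv⟩ := hStepCh_iff_exists_headStep.1 hv
    obtain ⟨_, rfl⟩ := HeadStep.deterministic hs hv
    exact ih

end BigStep

/-! ### Standard silent reduction -/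

/-- Standard silent reduction, in the inductive form of Kashima's proof of the standardization
theorem: silent spine steps expose the root constructor of the target, and the immediate subterms
are reduced standardly in turn. -/
inductive SilentStd : CTerm → CTerm → Prop
  | var {t : CTerm} {n : ℕ} : SilentSpineSteps t (.var n) → SilentStd t (.var n)
  | lam {t a a' : CTerm} {p : Player} :
      SilentSpineSteps t (.lam p a) → SilentStd a a' → SilentStd t (.lam p a')
  | app {t a a' b b' : CTerm} {p : Player} :
      SilentSpineSteps t (.app p a b) → SilentStd a a' → SilentStd b b' →
      SilentStd t (.app p a' b')

namespace SilentStd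

@[refl]
theorem refl (t : CTerm) : SilentStd t t := by
  induction t with
  | var n => exact .var .refl
  | lam p t ih => exact .lam .refl ih
  | app p t u iht ihu => exact .app .refl iht ihu

theorem head {t s u : CTerm} (hts : SilentSpineSteps t s) (hsu : SilentStd s u) :
    SilentStd t u := by
  cases hsu with
  | var h => exact .var (hts.trans h)
  | lam h ha => exact .lam (hts.trans h) ha
  | app h ha hb => exact .app (hts.trans h) ha hb

theorem liftAt {t u : CTerm} (h : SilentStd t u) (d : ℕ) :
    SilentStd (t.liftAt d) (u.liftAt d) := by
  induction h generalizing d with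
  | var h => exact .var (SilentSpineSteps.liftAt h d)
  | lam h _ ih => exact .lam (SilentSpineSteps.liftAt h d) (ih _)
  | app h _ _ iha ihb => exact .app (SilentSpineSteps.liftAt h d) (iha d) (ihb d)

theorem subst {t u s s' : CTerm} (h : SilentStd t u) (x : ℕ) (hs : SilentStd s s') :
    SilentStd (t.subst x s) (u.subst x s') := by
  induction h generalizing x s s' with
  | var h =>
    refine head (SilentSpineSteps.subst h x s) ?_
    simp only [CTerm.subst]
    split_ifs
    exacts [hs, refl _, refl _]
  | lam h _ ih => exact .lam (SilentSpineSteps.subst h x s) (ih _ (hs.liftAt 0))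
  | app h _ _ iha ihb => exact .app (SilentSpineSteps.subst h x s) (iha x hs) (ihb x hs)

theorem of_stepTau {t u : CTerm} (h : StepTau t u) : SilentStd t u := by
  unfold StepTau at h
  induction h with
  | root h => exact head (.single (.root (silentRoot_eq_betaRoot_zero ▸ h))) (refl _)
  | lam p _ ih => exact .lam .refl ih
  | appL p u _ ih => exact .app .refl ih (refl u)
  | appR p t _ ih => exact .app .refl (refl t) ih

theorem exists_spineStep {t u u' : CTerm} {i : ℕ} (h : SilentStd t u) (hs : SpineStep i u u') :
    ∃ s t', SilentSpineSteps t s ∧ SpineStep i s t' ∧ SilentStd t' u' := by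
  induction hs generalizing t with
  | root hs =>
    obtain ⟨p, q, a, b, hi⟩ := hs
    obtain _ | _ | ⟨htab, hlam, hb⟩ := h
    obtain _ | ⟨hexp, ha⟩ | _ := hlam
    exact ⟨_, _, htab.trans (SilentSpineSteps.appL hexp _ _), .root (.beta p q _ _ hi),
      ha.subst 0 hb⟩
  | appL p b _ ih =>
    obtain _ | _ | ⟨htab, ha, hb⟩ := h
    obtain ⟨s, a', has, hsa', ha'⟩ := ih ha
    exact ⟨_, _, htab.trans (SilentSpineSteps.appL has _ _), .appL p _ hsa', .app .refl ha' hb⟩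

theorem exists_headStep {t u u' : CTerm} {i : ℕ} (h : SilentStd t u) (hs : HeadStep i u u') :
    ∃ s t', SilentHeadSteps t s ∧ HeadStep i s t' ∧ SilentStd t' u' := by
  induction hs generalizing t with
  | spine hs =>
    obtain ⟨s, t', hts, hst', ht'⟩ := h.exists_spineStep hs
    exact ⟨s, t', SilentSpineSteps.headSteps hts, .spine hst', ht'⟩
  | lam p _ ih =>
    obtain _ | ⟨hta, ha⟩ | _ := h
    obtain ⟨s, a', has, hsa', ha'⟩ := ih ha
    exact ⟨_, _, (SilentSpineSteps.headSteps hta).trans (SilentHeadSteps.lam has p), .lam p hsa',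
      .lam .refl ha'⟩

theorem exists_neutral {t u : CTerm} (h : SilentStd t u) (hu : u.Neutral) :
    ∃ s, SilentSpineSteps t s ∧ s.Neutral := by
  induction hu generalizing t with
  | var n =>
    obtain ⟨htn⟩ := h
    exact ⟨_, htn, .var n⟩
  | app p b _ ih =>
    obtain _ | _ | ⟨htab, ha, _⟩ := h
    obtain ⟨s, has, hs⟩ := ih ha
    exact ⟨_, htab.trans (SilentSpineSteps.appL has _ _), .app p _ hs⟩

theorem exists_headNormal {t u : CTerm} (h : SilentStd t u) (hu : u.HeadNormal) :
    ∃ s, SilentHeadSteps t s ∧ s.HeadNormal := by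
  induction hu generalizing t with
  | neutral hu =>
    obtain ⟨s, hts, hs⟩ := h.exists_neutral hu
    exact ⟨s, SilentSpineSteps.headSteps hts, .neutral hs⟩
  | lam p _ ih =>
    obtain _ | ⟨hta, ha⟩ | _ := h
    obtain ⟨s, has, hs⟩ := ih ha
    exact ⟨_, (SilentSpineSteps.headSteps hta).trans (SilentHeadSteps.lam has p), .lam p hs⟩

theorem bigStep_of_bigStep_right {t u : CTerm} {k : ℕ} (h : SilentStd t u) (hu : BigStep u k) :
    BigStep t k := by
  induction hu using BigStep.label_induction generalizing t with
  | normal hu =>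
    obtain ⟨s, hts, hs⟩ := h.exists_headNormal hu
    exact .of_silentHeadSteps hts (.of_headNormal hs)
  | step hs _ ih =>
    obtain ⟨s, t', hts, hst', ht'⟩ := h.exists_headStep hs
    exact .of_silentHeadSteps hts (.of_headStep hst' (ih ht'))

theorem exists_bigStep_of_acc {t u : CTerm} (h : SilentStd t u)
    (ht : Acc (fun v u ↦ HStepCh u v) t) : ∃ k, BigStep u k := by
  -- The induction is on `→hch⁺` because `t` may make several head steps for one of `u`.
  replace ht := ht.transGen
  induction ht generalizing u with
  | intro t _ ih =>
    rcases u.headNormal_or_headStep with hu | ⟨i, u', hs⟩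
    · exact ⟨0, .of_headNormal hu⟩
    · obtain ⟨s, t', hts, hst', ht'⟩ := h.exists_headStep hs
      have t_reaches_t' : TransGen (fun v u ↦ HStepCh u v) t' t :=
        .head' (hStepCh_iff_exists_headStep.2 ⟨i, hst'⟩)
          (ReflTransGen.mono (fun _ _ h ↦ hStepCh_iff_exists_headStep.2 ⟨0, h⟩) _ _ hts.swap)
      obtain ⟨k, hk⟩ := ih t' t_reaches_t' ht'
      exact ⟨k + i, .of_headStep hs hk⟩

theorem bigStep_iff {t u : CTerm} {k : ℕ} (h : SilentStd t u) : BigStep t k ↔ BigStep u k := by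
  refine ⟨fun ht ↦ ?_, h.bigStep_of_bigStep_right⟩
  obtain ⟨l, hu⟩ := h.exists_bigStep_of_acc ht.acc
  exact ht.deterministic (h.bigStep_of_bigStep_right hu) ▸ hu

end SilentStd

/-! ### The interaction preorder -/

namespace CCtx

/-- Composition of contexts: the hole of the first is replaced by the second. -/
def comp : CCtx → CCtx → CCtx
  | .hole, D => D
  | .lam p C, D => .lam p (C.comp D)
  | .appL p C u, D => .appL p (C.comp D) u
  | .appR p s C, D => .appR p s (C.comp D)

theorem fill_comp (C D : CCtx) (t : CTerm) : (C.comp D).fill t = C.fill (D.fill t) := by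
  induction C with
  | hole => rfl
  | _ => simp only [comp, fill, *]

end CCtx

theorem StepTau.fill {t u : CTerm} (h : StepTau t u) (C : CCtx) :
    StepTau (C.fill t) (C.fill u) := by
  induction C with
  | hole => exact h
  | lam p C ih => exact .lam p ih
  | appL p C s ih => exact .appL p s ih
  | appR p s C ih => exact .appR p s ih

namespace IntCtxLe

@[refl]
theorem refl (t : CTerm) : IntCtxLe t t := fun _ _ h ↦ h

theorem trans {t u s : CTerm} (htu : IntCtxLe t u) (hus : IntCtxLe u s) : IntCtxLe t s :=
  fun C k h ↦ hus C k (htu C k h)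

theorem fill {t u : CTerm} (h : IntCtxLe t u) (D : CCtx) : IntCtxLe (D.fill t) (D.fill u) := by
  intro C k
  simpa only [CCtx.fill_comp] using h (C.comp D) k

theorem of_silentConv {t u : CTerm} (h : SilentConv t u) : IntCtxLe t u := by
  unfold SilentConv at h
  induction h with
  | refl => exact refl t
  | tail _ hs ih =>
    refine ih.trans fun C k ↦ ?_
    rcases hs with hs | hs
    · exact (SilentStd.of_stepTau (hs.fill C)).bigStep_iff.1
    · exact (SilentStd.of_stepTau (hs.fill C)).bigStep_iff.2

end IntCtxLe

namespace Lam

theorem tag_liftAt (t : Lam) (p : Player) (d : ℕ) :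
    (t.liftAt d).tag p = (t.tag p).liftAt d := by
  induction t generalizing d with
  | var n => rfl
  | lam t ih => simp only [liftAt, tag, CTerm.liftAt, ih]
  | app t u iht ihu => simp only [liftAt, tag, CTerm.liftAt, iht, ihu]

theorem tag_subst (t u : Lam) (p : Player) (x : ℕ) :
    (t.subst x u).tag p = (t.tag p).subst x (u.tag p) := by
  induction t generalizing x u with
  | var n =>
    simp only [subst, tag, CTerm.subst]
    split_ifs <;> rfl
  | lam t ih => simp only [subst, tag, CTerm.subst, ih, tag_liftAt]
  | app t s iht ihs => simp only [subst, tag, CTerm.subst, iht, ihs]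

end Lam

theorem LCtx.tag_fill (C : LCtx) (t : Lam) (p : Player) :
    (C.fill t).tag p = (C.tag p).fill (t.tag p) := by
  induction C with
  | hole => rfl
  | _ => simp only [LCtx.fill, LCtx.tag, Lam.tag, CCtx.fill, *]

theorem LBeta.stepTau_tag {t u : Lam} (h : LBeta t u) (p : Player) :
    StepTau (t.tag p) (u.tag p) := by
  unfold LBeta at h
  induction h with
  | root h =>
    obtain ⟨t, u⟩ := h
    rw [Lam.tag_subst]
    exact .root (.beta p _ _)
  | lam _ ih => exact .lam p ih
  | appL u _ ih => exact .appL p _ ih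
  | appR t _ ih => exact .appR p _ ih

theorem LBetaConv.silentConv_tag {t u : Lam} (h : LBetaConv t u) (p : Player) :
    SilentConv (t.tag p) (u.tag p) :=
  h.lift (Lam.tag · p) fun _ _ ↦ Or.imp (LBeta.stepTau_tag · p) (LBeta.stepTau_tag · p)

theorem IntLe.fill {t u : Lam} (h : IntLe t u) (C : LCtx) : IntLe (C.fill t) (C.fill u) := by
  simpa only [IntLe, LCtx.tag_fill] using IntCtxLe.fill h (C.tag .black)

theorem lEta_etaExpansion_var (n : ℕ) : LEta (.lam (.app (.var (n + 1)) (.var 0))) (.var n) :=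
  .root (.eta (.var n))

theorem not_intLe_etaExpansion_var (n : ℕ) :
    ¬ IntLe (.lam (.app (.var (n + 1)) (.var 0))) (.var n) := by
  intro h
  let C : CCtx := .appL .white .hole (.var 0)
  have expansion_interacts :
      BigStep (C.fill (.lam .black (.app .black (.var (n + 1)) (.var 0)))) 1 :=
    .of_headStep (.spine (.root (.beta .white .black _ _ rfl)))
      (.of_headNormal (.neutral (.app _ _ (.var n))))
  have var_does_not_interact : BigStep (C.fill (.var n)) 0 :=
    .of_headNormal (.neutral (.app _ _ (.var n)))
  exact one_ne_zero ((h C 1 expansion_interacts).deterministic var_does_not_interact)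

/-- The interaction preorder `⊑int` is a consistent inequational λ-theory:
a compatible preorder containing β-conversion and different from the total relation;
moreover it is not semi-extensional (it does not contain η-reduction), hence
not extensional (it does not contain η-conversion). -/
theorem intLe_consistent_inequational_theory :
    (∀ t, IntLe t t) ∧
    (∀ t u s, IntLe t u → IntLe u s → IntLe t s) ∧
    (∀ t u, IntLe t u → ∀ C : LCtx, IntLe (C.fill t) (C.fill u)) ∧
    (∀ t u, LBetaConv t u → IntLe t u) ∧
    (∃ t u, ¬ IntLe t u) ∧
    (∃ t u, LEta t u ∧ ¬ IntLe t u) ∧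
    (∃ t u, LEtaConv t u ∧ ¬ IntLe t u) := by
  have eta := lEta_etaExpansion_var 0
  have not_intLe := not_intLe_etaExpansion_var 0
  refine ⟨fun t ↦ .refl _, fun t u s ↦ .trans, fun t u ↦ .fill, fun t u h ↦ ?_,
    ⟨_, _, not_intLe⟩, ⟨_, _, eta, not_intLe⟩, ⟨_, _, .single (.inl eta), not_intLe⟩⟩
  exact .of_silentConv (h.silentConv_tag .black)
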